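/- Let x be a rational number with 0 < x < 1 and F(x) = x/(1+x). If 0 < x ≤ 1/2 then H(x) = (1 + x)·H(F(x)); if 1/2 ≤ x < 1 then H(x) = (1 + x)·H(F(x)) − x·ln x + (2x − 1)·ln(2x − 1) + (1 − x)·ln(1 − x). (Note F(x) ≤ 1/3 < 1/2, so H(F(x)) is given by the first branch of the definition of H.) -/

import Mathlib

/-!
Along the path `L u`, the Haros graph of `⟨L u⟩` is a cyclic arrangement of copies of `G_{0/1}` and
`G_{1/1}`, glued at junctions. A junction `0|1` has degree `2`, a junction `0|0` or `1|1` has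
degree `3`, and the junctions `1|0`, the boundary included, have larger degrees. For `x = p/q`
there are `q - p` copies of `G_{0/1}` and `p` copies of `G_{1/1}`, and `0|0`, `1|1` do not both
occur, so `2` and `3` have multiplicities `min p (q - p)` and `|q - 2 * p|`. The terms subtracted
in the reduced entropy are those of the degrees `2` and `3`, hence `q * H(x)` is the entropy, not
normalized, of the degrees at the junctions `1|0` alone.

The path of `x / (1 + x)` is `L L u`: it replaces every copy of `G_{1/1}` by the block
`G_{0/1} ⊕ G_{1/1}`. This raises the degree at every junction `1|0` by one and turns the junctions
`1|1`, which occur only if `x > 1/2`, into new junctions of degree `5`. The chain rule for entropy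
gives the three additional terms.
-/

/-- Symbols for paths in the Farey binary tree. -/
inductive LR
  | L
  | R
deriving DecidableEq

/-- One step in the Farey binary tree: update the current pair of fractions
(represented as pairs (numerator, denominator) of naturals). -/
def fareyStep : ((ℕ × ℕ) × (ℕ × ℕ)) → LR → ((ℕ × ℕ) × (ℕ × ℕ))
  | ((a, b), (c, d)), LR.L => ((a, b), (a + c, b + d))
  | ((a, b), (c, d)), LR.R => ((a + c, b + d), (c, d))

/-- The final pair of fractions of a word: after reading the first symbol `L`
the current pair is (0/1, 1/1); the remaining symbols update it. -/
def finalPair (w : List LR) : (ℕ × ℕ) × (ℕ × ℕ) :=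
  w.tail.foldl fareyStep ((0, 1), (1, 1))

/-- The value ⟨w⟩ of a word: the mediant of its final pair, as (numerator, denominator). -/
def value (w : List LR) : ℕ × ℕ :=
  ((finalPair w).1.1 + (finalPair w).2.1, (finalPair w).1.2 + (finalPair w).2.2)

/-- A word over {L,R} is a Farey word when its first symbol is `L`. -/
def IsFareyWord (w : List LR) : Prop := w.head? = some LR.L

/-- Concatenation of degree sequences:
[a₁,…,a_s] ⊕ [b₁,…,b_t] = [a₁+1, a₂, …, a_{s−1}, a_s+b₁, b₂, …, b_{t−1}, b_t+1]. -/
def oplus (A B : List ℕ) : List ℕ :=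
  (A.dropLast.modifyHead (· + 1)) ++ [A.getLastD 0 + B.headD 0] ++ B.tail.dropLast
    ++ [B.getLastD 0 + 1]

/-- Update of the pair (D(left ancestor), D(right ancestor)) of unreduced degree
sequences along one symbol. -/
def degStep : (List ℕ × List ℕ) → LR → (List ℕ × List ℕ)
  | (A, B), LR.L => (A, oplus A B)
  | (A, B), LR.R => (oplus A B, B)

/-- The pair (D(a/b), D(c/d)) of unreduced degree sequences of the final pair of a word;
0/1 and 1/1 are both assigned the list [1,1]. -/
def degPair (w : List LR) : List ℕ × List ℕ :=
  w.tail.foldl degStep ([1, 1], [1, 1])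

/-- The unreduced degree sequence D(⟨w⟩) = D(a/b) ⊕ D(c/d) of the value of a word. -/
def Dseq (w : List LR) : List ℕ :=
  oplus (degPair w).1 (degPair w).2

/-- Reduction: [k₁,…,k_{q+1}] becomes [k₂,…,k_q, k₁+k_{q+1}]; the last entry is the
boundary degree and the remaining ones are the inner degrees. -/
def reduce (D : List ℕ) : List ℕ :=
  D.tail.dropLast ++ [D.headD 0 + D.getLastD 0]

/-- The reduced degree sequence of the Haros graph G_{⟨w⟩}. -/
def degSeq (w : List LR) : List ℕ := reduce (Dseq w)

/-- Degree-distribution entropy S of the Haros graph G_{⟨w⟩}: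
S = −Σ_k P(k)·ln P(k), summed over the degree values occurring in the reduced
degree sequence, where P(k) = m(k)/q. -/
noncomputable def Sent (w : List LR) : ℝ :=
  -∑ k ∈ (degSeq w).toFinset,
    (((degSeq w).count k : ℝ) / ((value w).2 : ℝ)) *
      Real.log (((degSeq w).count k : ℝ) / ((value w).2 : ℝ))

/-- Reduced entropy H of the Haros graph G_{⟨w⟩} (with the convention 0·ln 0 = 0,
automatic since Real.log 0 = 0). -/
noncomputable def Hent (w : List LR) : ℝ :=
  let x : ℝ := ((value w).1 : ℝ) / ((value w).2 : ℝ)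
  if x ≤ 1 / 2 then
    Sent w + 2 * x * Real.log x + (1 - 2 * x) * Real.log (1 - 2 * x)
  else
    Sent w + 2 * (1 - x) * Real.log (1 - x) + (2 * x - 1) * Real.log (2 * x - 1)

section Entropy

variable {α β : Type*} [DecidableEq α] [DecidableEq β]

/-- The Shannon entropy of the distribution of the elements of `M`, multiplied by the number of
elements of `M`: in this normalization the entropy of a disjoint sum is the sum of the entropies, up
to terms depending on cardinalities only. -/
noncomputable def totalEntropy (M : Multiset α) : ℝ :=
  ∑ k ∈ M.toFinset, Real.negMulLog (M.count k) - Real.negMulLog M.card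

theorem mul_negMulLog_div (x : ℝ) {y : ℝ} (hy : y ≠ 0) :
    y * Real.negMulLog (x / y) = Real.negMulLog x + x * Real.log y := by
  rcases eq_or_ne x 0 with rfl | hx
  · simp
  · rw [Real.negMulLog, Real.negMulLog, Real.log_div hx hy]
    field_simp
    ring

theorem card_mul_sum_negMulLog_count_div_card (M : Multiset α) :
    M.card * ∑ k ∈ M.toFinset, Real.negMulLog (M.count k / M.card) = totalEntropy M := by
  rcases eq_or_ne M 0 with rfl | hM
  · simp [totalEntropy]
  · have hcard : (M.card : ℝ) ≠ 0 := by simpa using hM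
    have hsum : ∑ k ∈ M.toFinset, (M.count k : ℝ) = M.card := by
      exact_mod_cast M.toFinset_sum_count_eq
    simp only [Finset.mul_sum, mul_negMulLog_div _ hcard, Finset.sum_add_distrib,
      ← Finset.sum_mul, hsum, totalEntropy]
    rw [Real.negMulLog_def]
    ring

theorem totalEntropy_replicate (n : ℕ) (a : α) :
    totalEntropy (Multiset.replicate n a) = 0 := by
  rcases eq_or_ne n 0 with rfl | hn
  · simp [totalEntropy]
  · simp [totalEntropy, Multiset.toFinset_replicate, hn]

theorem totalEntropy_map {f : α → β} (hf : f.Injective) (M : Multiset α) :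
    totalEntropy (M.map f) = totalEntropy M := by
  simp only [totalEntropy, Multiset.toFinset_map, Finset.sum_image hf.injOn,
    Multiset.count_map_eq_count' f _ hf, Multiset.card_map]

theorem totalEntropy_add {M N : Multiset α} (h : Disjoint M N) :
    totalEntropy (M + N) = totalEntropy M + totalEntropy N + Real.negMulLog M.card +
      Real.negMulLog N.card - Real.negMulLog (M.card + N.card) := by
  have hM : ∑ k ∈ M.toFinset, Real.negMulLog ((M + N).count k) =
      ∑ k ∈ M.toFinset, Real.negMulLog (M.count k) :=
    Finset.sum_congr rfl fun k hk => by
      rw [Multiset.count_add, Multiset.count_eq_zero_of_notMem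
        (Multiset.disjoint_left.1 h (Multiset.mem_toFinset.1 hk)), add_zero]
  have hN : ∑ k ∈ N.toFinset, Real.negMulLog ((M + N).count k) =
      ∑ k ∈ N.toFinset, Real.negMulLog (N.count k) :=
    Finset.sum_congr rfl fun k hk => by
      rw [Multiset.count_add, Multiset.count_eq_zero_of_notMem
        (Multiset.disjoint_right.1 h (Multiset.mem_toFinset.1 hk)), zero_add]
  rw [totalEntropy, Multiset.toFinset_add, Finset.sum_union (Multiset.disjoint_toFinset.2 h),
    hM, hN, Multiset.card_add, Nat.cast_add, totalEntropy, totalEntropy]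
  ring

end Entropy

/-- The junctions of a cyclic arrangement of left and right blocks; in a Haros graph these are
copies of `G_{0/1}` and of `G_{1/1}`. The number `lr` counts the junctions of a left block followed
by a right one, similarly for `ll` and `rr`. A junction of a right block followed by a left one is
recorded in `rl` by the excess of its degree over `d + a`, where `d` is the last degree of the right
block and `a` the first degree of the left block. -/
structure Junctions where
  lr : ℕ
  ll : ℕ
  rr : ℕ
  rl : Multiset ℕ

/-- The number of left blocks: each is followed by a left or by a right block. -/
def Junctions.left (J : Junctions) : ℕ := J.lr + J.ll

/-- The number of right blocks: each is preceded by a left or by a right block. -/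
def Junctions.right (J : Junctions) : ℕ := J.lr + J.rr

/-- The junctions of the arrangement of copies of `A` and `B` that is obtained from the pair
`(A, B)` by descending along `u` and taking the final mediant. For the empty word, the only
junction of `B` and `A` is the boundary of `A ⊕ B`, of degree `(d + 1) + (a + 1)`. Descending along
`L` first amounts to replacing each copy of `B` by the block `A ⊕ B`, whose end degrees exceed those
of `A` and `B` by one; symmetrically for `R`. -/
def junctions : List LR → Junctions
  | [] => ⟨1, 0, 0, {2}⟩
  | .L :: u => ⟨(junctions u).right, (junctions u).left, 0,
      Multiset.replicate (junctions u).rr 3 + (junctions u).rl.map (· + 1)⟩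
  | .R :: u => ⟨(junctions u).left, 0, (junctions u).right,
      Multiset.replicate (junctions u).ll 3 + (junctions u).rl.map (· + 1)⟩

theorem junctions_cons_L_left (u : List LR) :
    (junctions (.L :: u)).left = (junctions u).left + (junctions u).right := by
  simp only [junctions, Junctions.left, Junctions.right]
  omega

theorem junctions_cons_L_right (u : List LR) :
    (junctions (.L :: u)).right = (junctions u).right := rfl

theorem junctions_cons_R_left (u : List LR) :
    (junctions (.R :: u)).left = (junctions u).left := rfl

theorem junctions_cons_R_right (u : List LR) :
    (junctions (.R :: u)).right = (junctions u).left + (junctions u).right := rfl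

theorem junctions_left_pos_and_right_pos (u : List LR) :
    0 < (junctions u).left ∧ 0 < (junctions u).right := by
  induction u with
  | nil => decide
  | cons s u ih =>
    cases s <;> simp only [junctions_cons_L_left, junctions_cons_L_right, junctions_cons_R_left,
      junctions_cons_R_right] <;> omega

theorem junctions_left_right_injective {u u' : List LR}
    (hleft : (junctions u).left = (junctions u').left)
    (hright : (junctions u).right = (junctions u').right) : u = u' := by
  -- Each letter inverts a step of the subtractive Euclidean algorithm, so the larger of the two
  -- numbers determines the first letter.
  induction u generalizing u' with
  | nil =>
    rcases u' with _ | ⟨_ | _, u'⟩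
    · rfl
    all_goals
      have hu' := junctions_left_pos_and_right_pos u'
      have hnil : (junctions []).left = 1 ∧ (junctions []).right = 1 := ⟨rfl, rfl⟩
      simp only [junctions_cons_L_left, junctions_cons_L_right, junctions_cons_R_left,
        junctions_cons_R_right] at hleft hright
      omega
  | cons s u ih =>
    have hu := junctions_left_pos_and_right_pos u
    rcases u' with _ | ⟨s', u'⟩
    · have hnil : (junctions []).left = 1 ∧ (junctions []).right = 1 := ⟨rfl, rfl⟩
      cases s <;> simp only [junctions_cons_L_left, junctions_cons_L_right,
        junctions_cons_R_left, junctions_cons_R_right] at hleft hright <;> omega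
    · have hu' := junctions_left_pos_and_right_pos u'
      cases s <;> cases s' <;> simp only [junctions_cons_L_left, junctions_cons_L_right,
        junctions_cons_R_left, junctions_cons_R_right] at hleft hright
      · rw [ih (by omega) hright]
      · omega
      · omega
      · rw [ih hleft (by omega)]

theorem junctions_ll_eq_zero_or_rr_eq_zero (u : List LR) :
    (junctions u).ll = 0 ∨ (junctions u).rr = 0 := by
  rcases u with _ | ⟨_ | _, u⟩ <;> simp [junctions]

theorem card_junctions_rl (u : List LR) : (junctions u).rl.card = (junctions u).lr := by
  induction u with
  | nil => rfl
  | cons s u ih =>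
    cases s <;> simp [junctions, Junctions.left, Junctions.right, ih, add_comm]

theorem two_le_of_mem_junctions_rl {u : List LR} {k : ℕ} (hk : k ∈ (junctions u).rl) :
    2 ≤ k := by
  induction u generalizing k with
  | nil => simp_all [junctions]
  | cons s u ih =>
    cases s <;> simp only [junctions, Multiset.mem_add, Multiset.mem_map] at hk <;>
      rcases hk with hk | ⟨i, hi, rfl⟩ <;> grind [Multiset.eq_of_mem_replicate]

theorem three_le_of_mem_junctions_rl {u : List LR} (hu : u ≠ []) {k : ℕ}
    (hk : k ∈ (junctions u).rl) : 3 ≤ k := by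
  rcases u with _ | ⟨_ | _, u⟩
  · contradiction
  all_goals
    simp only [junctions, Multiset.mem_add, Multiset.mem_map] at hk
    rcases hk with hk | ⟨i, hi, rfl⟩
    · exact (Multiset.eq_of_mem_replicate hk).ge
    · exact Nat.succ_le_succ (two_le_of_mem_junctions_rl hi)

theorem foldl_fareyStep_add (u : List LR) (v₁ v₂ : ℕ × ℕ) :
    (u.foldl fareyStep (v₁, v₂)).1 + (u.foldl fareyStep (v₁, v₂)).2 =
      (junctions u).left • v₁ + (junctions u).right • v₂ := by
  induction u generalizing v₁ v₂ with
  | nil => simp [junctions, Junctions.left, Junctions.right]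
  | cons s u ih =>
    cases s
    · have h : fareyStep (v₁, v₂) .L = (v₁, v₁ + v₂) := rfl
      rw [List.foldl_cons, h, ih, junctions_cons_L_left, junctions_cons_L_right]
      module
    · have h : fareyStep (v₁, v₂) .R = (v₁ + v₂, v₂) := rfl
      rw [List.foldl_cons, h, ih, junctions_cons_R_left, junctions_cons_R_right]
      module

theorem value_cons (u : List LR) :
    value (.L :: u) = ((junctions u).right, (junctions u).left + (junctions u).right) := by
  have h := foldl_fareyStep_add u (0, 1) (1, 1)
  simpa [Prod.ext_iff, value, finalPair] using h

theorem value_snd_cons_eq (u : List LR) :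
    ((value (.L :: u)).2 : ℝ) =
      2 * (junctions u).lr + ((junctions u).ll + (junctions u).rr) := by
  simp only [value_cons, Junctions.left, Junctions.right]
  push_cast
  ring

theorem value_snd_cons_pos (u : List LR) : 0 < (value (.L :: u)).2 := by
  rw [value_cons]
  exact Nat.add_pos_left (junctions_left_pos_and_right_pos u).1 _

theorem value_cons_L (u : List LR) :
    value (.L :: .L :: u) =
      ((value (.L :: u)).1, (value (.L :: u)).1 + (value (.L :: u)).2) := by
  rw [value_cons, value_cons, junctions_cons_L_left, junctions_cons_L_right,
    add_comm (_ + _) (junctions u).right]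

theorem value_cons_injective : Function.Injective fun u => value (.L :: u) := by
  intro u u' h
  simp only [value_cons, Prod.mk.injEq] at h
  exact junctions_left_right_injective (by omega) h.1

theorem oplus_eq (a b c d : ℕ) (l m : List ℕ) :
    oplus (a :: l ++ [b]) (c :: m ++ [d]) = (a + 1) :: (l ++ (b + c) :: m) ++ [d + 1] := by
  simp only [oplus, List.dropLast_concat, List.getLastD_concat]
  simp

theorem reduce_eq (a b : ℕ) (l : List ℕ) : reduce (a :: l ++ [b]) = l ++ [a + b] := by
  simp only [reduce, List.getLastD_concat]
  simp

/-- The degrees of the cyclic arrangement with junctions `J` in which the left blocks have first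
degree `a`, inner degrees `M` and last degree `b`, and the right blocks have first degree `c`,
inner degrees `N` and last degree `d`. -/
def Junctions.degrees (J : Junctions) (a b c d : ℕ) (M N : Multiset ℕ) : Multiset ℕ :=
  J.left • M + J.right • N + Multiset.replicate J.lr (b + c) +
    Multiset.replicate J.ll (b + (a + 1)) + Multiset.replicate J.rr (d + 1 + c) +
    J.rl.map (d + a + ·)

theorem junctions_cons_L_degrees (u : List LR) (a b c d : ℕ) (M N : Multiset ℕ) :
    (junctions (.L :: u)).degrees a b c d M N =
      (junctions u).degrees a b (a + 1) (d + 1) M (M + {b + c} + N) := by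
  have hrr : d + 1 + 1 + (a + 1) = d + a + 3 := by omega
  have hrl (k : ℕ) : d + 1 + a + k = d + a + (k + 1) := by omega
  rw [Junctions.degrees, Junctions.degrees, junctions_cons_L_left, junctions_cons_L_right]
  simp only [junctions, Junctions.left, Junctions.right, Multiset.map_add, Multiset.map_map,
    Multiset.map_nsmul, Multiset.map_singleton, ← Multiset.nsmul_singleton,
    Function.comp_apply, hrr, hrl]
  module

theorem junctions_cons_R_degrees (u : List LR) (a b c d : ℕ) (M N : Multiset ℕ) :
    (junctions (.R :: u)).degrees a b c d M N =
      (junctions u).degrees (a + 1) (d + 1) c d (M + {b + c} + N) N := by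
  have hll : d + 1 + (a + 1 + 1) = d + a + 3 := by omega
  have hrl (k : ℕ) : d + (a + 1) + k = d + a + (k + 1) := by omega
  rw [Junctions.degrees, Junctions.degrees, junctions_cons_R_left, junctions_cons_R_right]
  simp only [junctions, Junctions.left, Junctions.right, Multiset.map_add, Multiset.map_map,
    Multiset.map_nsmul, Multiset.map_singleton, ← Multiset.nsmul_singleton,
    Function.comp_apply, hll, hrl]
  module

theorem coe_append_cons {α : Type*} (l m : List α) (a : α) :
    ((l ++ a :: m : List α) : Multiset α) = l + {a} + m := by
  rw [← Multiset.coe_add, ← Multiset.cons_coe, ← Multiset.singleton_add, add_assoc]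

theorem coe_reduce_oplus_foldl_degStep (u : List LR) (a b c d : ℕ) (l m : List ℕ) :
    (reduce (oplus (u.foldl degStep (a :: l ++ [b], c :: m ++ [d])).1
      (u.foldl degStep (a :: l ++ [b], c :: m ++ [d])).2) : Multiset ℕ) =
      (junctions u).degrees a b c d l m := by
  induction u generalizing a b c d l m with
  | nil =>
    have hend : a + 1 + (d + 1) = d + a + 2 := by omega
    rw [List.foldl_nil, oplus_eq, reduce_eq, ← Multiset.coe_add, coe_append_cons,
      Multiset.coe_singleton, hend]
    simp only [Junctions.degrees, junctions, Junctions.left, Junctions.right, add_zero, one_smul,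
      Multiset.replicate_zero, Multiset.replicate_one, Multiset.map_singleton]
    abel
  | cons s u ih =>
    cases s
    · rw [List.foldl_cons, degStep, oplus_eq, ih, coe_append_cons, junctions_cons_L_degrees]
    · rw [List.foldl_cons, degStep, oplus_eq, ih, coe_append_cons, junctions_cons_R_degrees]

theorem coe_degSeq_cons (u : List LR) :
    (degSeq (.L :: u) : Multiset ℕ) = Multiset.replicate (junctions u).lr 2 +
      Multiset.replicate ((junctions u).ll + (junctions u).rr) 3 +
      (junctions u).rl.map (2 + ·) := by
  have h : (degSeq (.L :: u) : Multiset ℕ) = (junctions u).degrees 1 1 1 1 0 0 :=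
    coe_reduce_oplus_foldl_degStep u 1 1 1 1 [] []
  rw [h, Junctions.degrees, Multiset.replicate_add]
  simp only [smul_zero, zero_add, Nat.reduceAdd, add_assoc]

theorem length_degSeq_cons (u : List LR) :
    (degSeq (.L :: u)).length = (value (.L :: u)).2 := by
  rw [← Multiset.coe_card, coe_degSeq_cons, value_cons]
  simp only [Multiset.card_add, Multiset.card_replicate, Multiset.card_map, card_junctions_rl,
    Junctions.left, Junctions.right]
  omega

theorem value_snd_mul_Sent_cons (u : List LR) :
    (value (.L :: u)).2 * Sent (.L :: u) = totalEntropy (degSeq (.L :: u) : Multiset ℕ) := by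
  rw [← card_mul_sum_negMulLog_count_div_card, Multiset.coe_card, length_degSeq_cons, Sent,
    ← Finset.sum_neg_distrib]
  simp [Real.negMulLog]

theorem totalEntropy_degSeq_cons (u : List LR) :
    totalEntropy (degSeq (.L :: u) : Multiset ℕ) = totalEntropy (junctions u).rl +
      2 * Real.negMulLog (junctions u).lr +
      Real.negMulLog ((junctions u).ll + (junctions u).rr) -
      Real.negMulLog (value (.L :: u)).2 := by
  have h₂₃ : Disjoint (Multiset.replicate (junctions u).lr 2)
      (Multiset.replicate ((junctions u).ll + (junctions u).rr) 3) := by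
    rw [Multiset.disjoint_left]
    grind [Multiset.mem_replicate]
  have h₄ : Disjoint (Multiset.replicate (junctions u).lr 2 +
      Multiset.replicate ((junctions u).ll + (junctions u).rr) 3)
      ((junctions u).rl.map (2 + ·)) := by
    rw [Multiset.disjoint_right]
    intro k hk
    obtain ⟨i, hi, rfl⟩ := Multiset.mem_map.1 hk
    have := two_le_of_mem_junctions_rl hi
    grind [Multiset.mem_replicate]
  have hq : ((value (.L :: u)).2 : ℝ) = (junctions u).lr +
      ((junctions u).ll + (junctions u).rr) + (junctions u).lr := by
    rw [value_snd_cons_eq]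
    ring
  rw [coe_degSeq_cons, totalEntropy_add h₄, totalEntropy_add h₂₃,
    totalEntropy_map (add_right_injective 2)]
  simp only [totalEntropy_replicate, Multiset.card_add, Multiset.card_replicate,
    Multiset.card_map, card_junctions_rl, hq, Nat.cast_add]
  ring

theorem Hent_cons (u : List LR) :
    Hent (.L :: u) = Sent (.L :: u) -
      2 * Real.negMulLog ((junctions u).lr / (value (.L :: u)).2) -
      Real.negMulLog (((junctions u).ll + (junctions u).rr) / (value (.L :: u)).2) := by
  have hq : (0 : ℝ) < (value (.L :: u)).2 := by exact_mod_cast value_snd_cons_pos u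
  have hp_eq : ((value (.L :: u)).1 : ℝ) = (junctions u).lr + (junctions u).rr := by
    rw [value_cons, Junctions.right, Nat.cast_add]
  have hq_eq := value_snd_cons_eq u
  simp only [Hent]
  generalize ((value (.L :: u)).2 : ℝ) = q at *
  have hx : ((junctions u).lr + (junctions u).rr) / q ≤ 1 / 2 ↔
      (junctions u).rr ≤ (junctions u).ll := by
    rw [div_le_div_iff₀ hq two_pos, hq_eq, ← Nat.cast_le (α := ℝ)]
    constructor <;> intro h <;> linarith
  have hcases := junctions_ll_eq_zero_or_rr_eq_zero u
  simp only [hp_eq, hx]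
  split_ifs with hle
  · have hrr : (junctions u).rr = 0 := by omega
    have hll : 1 - 2 * ((junctions u).lr / q) = (junctions u).ll / q := by
      simp only [hrr, Nat.cast_zero] at hq_eq
      field_simp
      linarith
    simp only [hrr, Nat.cast_zero, add_zero, hll, Real.negMulLog]
    ring
  · have hll : (junctions u).ll = 0 := by omega
    simp only [hll, Nat.cast_zero] at hq_eq
    have hlr : 1 - ((junctions u).lr + (junctions u).rr) / q = (junctions u).lr / q := by
      field_simp
      linarith
    have hrr : 2 * (((junctions u).lr + (junctions u).rr) / q) - 1 = (junctions u).rr / q := by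
      field_simp
      linarith
    simp only [hll, Nat.cast_zero, zero_add, hlr, hrr, Real.negMulLog]
    ring

theorem value_snd_mul_Hent_cons (u : List LR) :
    (value (.L :: u)).2 * Hent (.L :: u) = totalEntropy (junctions u).rl := by
  have hq : ((value (.L :: u)).2 : ℝ) ≠ 0 := by exact_mod_cast (value_snd_cons_pos u).ne'
  have hlr := mul_negMulLog_div (junctions u).lr hq
  have hllrr := mul_negMulLog_div ((junctions u).ll + (junctions u).rr) hq
  have hS := value_snd_mul_Sent_cons u
  have hlog : Real.negMulLog (value (.L :: u)).2 =
      -(value (.L :: u)).2 * Real.log (value (.L :: u)).2 := rfl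
  rw [totalEntropy_degSeq_cons, hlog] at hS
  rw [Hent_cons]
  linear_combination hS - 2 * hlr - hllrr + Real.log (value (.L :: u)).2 * value_snd_cons_eq u

theorem totalEntropy_junctions_rl_cons_L (u : List LR) :
    totalEntropy (junctions (.L :: u)).rl = totalEntropy (junctions u).rl +
      Real.negMulLog (junctions u).rr + Real.negMulLog (junctions u).lr -
      Real.negMulLog (junctions u).right := by
  have hdisj : Disjoint (Multiset.replicate (junctions u).rr 3)
      ((junctions u).rl.map (· + 1)) := by
    rcases eq_or_ne u [] with rfl | hu
    · simp [junctions]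
    · rw [Multiset.disjoint_right]
      intro k hk
      obtain ⟨i, hi, rfl⟩ := Multiset.mem_map.1 hk
      have := three_le_of_mem_junctions_rl hu hi
      grind [Multiset.mem_replicate]
  rw [junctions, totalEntropy_add hdisj, totalEntropy_replicate,
    totalEntropy_map (add_left_injective 1), Multiset.card_replicate, Multiset.card_map,
    card_junctions_rl, Junctions.right, Nat.cast_add, add_comm ((junctions u).rr : ℝ)]
  ring

theorem Hent_cons_eq_Hent_cons_L {u : List LR} {p q : ℕ} (h : value (.L :: u) = (p, q)) :
    Hent (.L :: u) = (1 + (p : ℝ) / q) * Hent (.L :: .L :: u) + Real.negMulLog (p / q) -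
      Real.negMulLog ((junctions u).rr / q) - Real.negMulLog ((junctions u).lr / q) := by
  have hq : (q : ℝ) ≠ 0 := by exact_mod_cast (h ▸ value_snd_cons_pos u).ne'
  have hright : (junctions u).right = p := congrArg Prod.fst ((value_cons u).symm.trans h)
  have hp : (p : ℝ) = (junctions u).lr + (junctions u).rr := by
    rw [← hright, Junctions.right, Nat.cast_add]
  have hH := value_snd_mul_Hent_cons u
  have hH' := value_snd_mul_Hent_cons (.L :: u)
  rw [value_cons_L, totalEntropy_junctions_rl_cons_L, ← hH, h, hright, Nat.cast_add] at hH'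
  have hdiv : q * ((1 + (p : ℝ) / q) * Hent (.L :: .L :: u)) =
      (p + q) * Hent (.L :: .L :: u) := by
    field_simp
    ring
  apply mul_left_cancel₀ hq
  linear_combination -hH' - hdiv - mul_negMulLog_div (p : ℝ) hq +
    mul_negMulLog_div ((junctions u).rr : ℝ) hq + mul_negMulLog_div ((junctions u).lr : ℝ) hq -
    Real.log q * hp

/-- for rational x = p/q ∈ (0,1) and F(x) = x/(1+x) = p/(p+q): if
x ≤ 1/2 then H(x) = (1+x)·H(F(x)); if x ≥ 1/2 then
H(x) = (1+x)·H(F(x)) − x·ln x + (2x−1)·ln(2x−1) + (1−x)·ln(1−x). -/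
theorem statement13 (p q : ℕ) (hcop : Nat.Coprime p q) (hp : 0 < p) (hpq : p < q)
    (w w' : List LR) (hw : IsFareyWord w) (hw' : IsFareyWord w')
    (hval : value w = (p, q)) (hval' : value w' = (p, p + q)) :
    (2 * p ≤ q → Hent w = (1 + (p : ℝ) / (q : ℝ)) * Hent w') ∧
    (q ≤ 2 * p → Hent w = (1 + (p : ℝ) / (q : ℝ)) * Hent w'
        - (p : ℝ) / (q : ℝ) * Real.log ((p : ℝ) / (q : ℝ))
        + (2 * ((p : ℝ) / (q : ℝ)) - 1) * Real.log (2 * ((p : ℝ) / (q : ℝ)) - 1)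
        + (1 - (p : ℝ) / (q : ℝ)) * Real.log (1 - (p : ℝ) / (q : ℝ))) := by
  obtain ⟨u, rfl⟩ : ∃ u, w = .L :: u := ⟨w.tail, List.eq_cons_of_mem_head? hw⟩
  obtain ⟨u', rfl⟩ : ∃ u', w' = .L :: u' := ⟨w'.tail, List.eq_cons_of_mem_head? hw'⟩
  obtain rfl : u' = .L :: u := value_cons_injective (by simp only [hval', value_cons_L, hval])
  have hq : (q : ℝ) ≠ 0 := by exact_mod_cast (hp.trans hpq).ne'
  have hH := Hent_cons_eq_Hent_cons_L hval
  have hzero := junctions_ll_eq_zero_or_rr_eq_zero u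
  have hpq_eq := value_cons u
  simp only [hval, Prod.mk.injEq, Junctions.left, Junctions.right] at hpq_eq
  refine ⟨fun h => ?_, fun h => ?_⟩
  · obtain ⟨hrr, hlr⟩ : (junctions u).rr = 0 ∧ (junctions u).lr = p := by omega
    simpa [hrr, hlr] using hH
  · have hrr : ((junctions u).rr : ℝ) = 2 * p - q := by
      rw [eq_sub_iff_add_eq]
      exact_mod_cast (by omega : (junctions u).rr + q = 2 * p)
    have hlr : ((junctions u).lr : ℝ) = q - p := by
      rw [eq_sub_iff_add_eq]
      exact_mod_cast (by omega : (junctions u).lr + p = q)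
    rw [hH, hrr, hlr, sub_div, sub_div, div_self hq, mul_div_assoc]
    simp only [Real.negMulLog]
    ring
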